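/- Suppose the candidate model j is overspecified and n > p_j + 2. Then E[tr(R̃⁻¹Λ)·σ*²/σ̂_j² + aᵀR̃⁻¹a/σ̂_j²] = nγ/(n − p_j − 2), where the expectation is over y ~ N_n(X(ω)β*, σ*²Σ); equivalently, the conditional Akaike information under covariate shift satisfies cAI = E[m·log(2π σ̂_j²)] + log|R̃| + nγ/(n − p_j − 2). -/

import Mathlib

/-!
Write `Σ = C Cᵀ`. Whitening turns the GLS fit of model `j` into the ordinary least squares fit with
design `Y = C⁻¹ X(j)`, whose hat matrix `Y (YᵀY)⁻¹ Yᵀ` is an orthogonal projection of rank `p_j`.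
An orthogonal matrix `U` diagonalises it, so with `y = X(ω)β* + σ* C U w` the vector `w` is standard
Gaussian and the coordinates split into a set `T` of `n - p_j` residual coordinates and the
remaining `p_j` fitted ones. For an overspecified model (`CSModel.exists_canonical`)

* `σ̂_j² = (σ*² / n) Q` with `Q = ∑ i ∈ T, w i ^ 2`, a chi-square variable with `n - p_j` degrees of
  freedom;
* `aᵀR̃⁻¹a = σ*² wᵀKw`, where `K` is supported off `T` and
  `tr K = tr[R̃⁻¹A(X(j)ᵀΣ⁻¹X(j))⁻¹Aᵀ]`. Here the full rank of `X(ω)` is used: it makes `β*` vanish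
  outside `j`, so the prediction bias vanishes as well (`CSModel.Xtw_beta_eq`).

Hence `wᵀKw` and `Q` are independent, and the expectation equals `n (tr(R̃⁻¹Λ) + tr K) E[1/Q]` with
`E[1/Q] = 1 / (n - p_j - 2)`. The inverse moment comes from `1/Q = ∫₀^∞ exp(-tQ) dt`, Tonelli and
the Laplace transform of the chi-square law (`lintegral_inv_chiSq`). Splitting `cAI` into its
summands also needs `log Q` to be integrable, which follows from `|log x| ≤ x + 1/x`.
-/

open Matrix MeasureTheory Real Filter Asymptotics

noncomputable section

/-- The covariate-shift linear mixed model setup of Kawakubo–Sugasawa–Kubokawa: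
observed model `y ~ N_n(X(ω)β*, σ*²Σ)` with `Σ = Z G Zᵀ + R`, a candidate model
given by a subset of the columns of `X(ω)` (encoded by an embedding
`emb : Fin pj ↪ Fin pw`), and a predictive model with covariate matrices
`X̃(ω)`, `Z̃` and error covariance matrix `R̃`. -/
structure CSModel (pw pj : ℕ) (n : ℕ) where
  q : ℕ
  m : ℕ
  /-- design matrix `X(ω)` of the full model -/
  Xw : Matrix (Fin n) (Fin pw) ℝ
  /-- the subset `j ⊆ {1,…,p_ω}` with `p_j` elements, as an embedding -/
  emb : Fin pj ↪ Fin pw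
  Z : Matrix (Fin n) (Fin q) ℝ
  Gm : Matrix (Fin q) (Fin q) ℝ
  Rm : Matrix (Fin n) (Fin n) ℝ
  /-- true regression coefficients `β*` -/
  beta : Fin pw → ℝ
  /-- true variance `σ*²` -/
  sig2 : ℝ
  /-- predictive-model covariates `X̃(ω)` -/
  Xtw : Matrix (Fin m) (Fin pw) ℝ
  Zt : Matrix (Fin m) (Fin q) ℝ
  Rt : Matrix (Fin m) (Fin m) ℝ
  hG : Gm.PosDef
  hR : Rm.PosDef
  hRt : Rt.PosDef
  hsig : 0 < sig2
  hrankw : Xw.rank = pw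
  hrankj : (Xw.submatrix id ⇑emb).rank = pj

namespace CSModel

variable {pw pj n : ℕ} (M : CSModel pw pj n)

/-- `X(j)`: the columns of `X(ω)` indexed by `j`. -/
def Xj : Matrix (Fin n) (Fin pj) ℝ := M.Xw.submatrix id ⇑M.emb

/-- `X̃(j)`: the columns of `X̃(ω)` indexed by `j`. -/
def Xtj : Matrix (Fin M.m) (Fin pj) ℝ := M.Xtw.submatrix id ⇑M.emb

/-- `Σ = Z G Zᵀ + R`. -/
def Sig : Matrix (Fin n) (Fin n) ℝ := M.Z * M.Gm * M.Zᵀ + M.Rm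

/-- `Σ̃ = Z̃ G Z̃ᵀ + R̃`. -/
def Sigt : Matrix (Fin M.m) (Fin M.m) ℝ := M.Zt * M.Gm * M.Ztᵀ + M.Rt

/-- `Λ = Σ̃ − Z̃GZᵀΣ⁻¹ZGZ̃ᵀ`. -/
def Lam : Matrix (Fin M.m) (Fin M.m) ℝ :=
  M.Sigt - M.Zt * M.Gm * M.Zᵀ * M.Sig⁻¹ * M.Z * M.Gm * M.Ztᵀ

/-- `A = X̃(j) − Z̃GZᵀΣ⁻¹X(j)`. -/
def Amat : Matrix (Fin M.m) (Fin pj) ℝ := M.Xtj - M.Zt * M.Gm * M.Zᵀ * M.Sig⁻¹ * M.Xj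

/-- the GLS matrix `(X(j)ᵀΣ⁻¹X(j))⁻¹X(j)ᵀΣ⁻¹` of the candidate model. -/
def gls : Matrix (Fin pj) (Fin n) ℝ := (M.Xjᵀ * M.Sig⁻¹ * M.Xj)⁻¹ * M.Xjᵀ * M.Sig⁻¹

/-- `β̂_j = (X(j)ᵀΣ⁻¹X(j))⁻¹X(j)ᵀΣ⁻¹ y`. -/
def betaHat (y : Fin n → ℝ) : Fin pj → ℝ := M.gls *ᵥ y

/-- the residual `y − X(j)β̂_j`. -/
def resid (y : Fin n → ℝ) : Fin n → ℝ := y - M.Xj *ᵥ M.betaHat y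

/-- `σ̂_j² = (y − X(j)β̂_j)ᵀΣ⁻¹(y − X(j)β̂_j)/n`. -/
def sigHat2 (y : Fin n → ℝ) : ℝ := (M.resid y ⬝ᵥ (M.Sig⁻¹ *ᵥ M.resid y)) / n

/-- the GLS matrix of the full model. -/
def glsw : Matrix (Fin pw) (Fin n) ℝ := (M.Xwᵀ * M.Sig⁻¹ * M.Xw)⁻¹ * M.Xwᵀ * M.Sig⁻¹

/-- the full-model GLS estimator `β̃ = β̂_ω`. -/
def betaTilde (y : Fin n → ℝ) : Fin pw → ℝ := M.glsw *ᵥ y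

/-- the full-model residual `y − X(ω)β̃`. -/
def residw (y : Fin n → ℝ) : Fin n → ℝ := y - M.Xw *ᵥ M.betaTilde y

/-- `σ̂_ω²`, the ML variance estimator of the full model. -/
def sigHatw2 (y : Fin n → ℝ) : ℝ := (M.residw y ⬝ᵥ (M.Sig⁻¹ *ᵥ M.residw y)) / n

/-- `σ̃² = (y − X(ω)β̃)ᵀΣ⁻¹(y − X(ω)β̃)/(n−p_ω)`, the unbiased full-model estimator. -/
def sigTilde2 (y : Fin n → ℝ) : ℝ :=
  (M.residw y ⬝ᵥ (M.Sig⁻¹ *ᵥ M.residw y)) / ((n : ℝ) - pw)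

/-- the empirical Bayes predictor `b̂_j = GZᵀΣ⁻¹(y − X(j)β̂_j)`. -/
def bHat (y : Fin n → ℝ) : Fin M.q → ℝ := (M.Gm * M.Zᵀ * M.Sig⁻¹) *ᵥ M.resid y

/-- `a = (X̃(j)β̂_j − X̃(ω)β*) − Z̃GZᵀΣ⁻¹(X(j)β̂_j − X(ω)β*)`. -/
def avec (y : Fin n → ℝ) : Fin M.m → ℝ :=
  (M.Xtj *ᵥ M.betaHat y - M.Xtw *ᵥ M.beta)
    - (M.Zt * M.Gm * M.Zᵀ * M.Sig⁻¹) *ᵥ (M.Xj *ᵥ M.betaHat y - M.Xw *ᵥ M.beta)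

/-- `γ = tr(R̃⁻¹Λ) + tr[R̃⁻¹A(X(j)ᵀΣ⁻¹X(j))⁻¹Aᵀ]`. -/
def gam : ℝ :=
  (M.Rt⁻¹ * M.Lam).trace + (M.Rt⁻¹ * M.Amat * (M.Xjᵀ * M.Sig⁻¹ * M.Xj)⁻¹ * M.Amatᵀ).trace

/-- `P_j = Σ⁻¹X(j)(X(j)ᵀΣ⁻¹X(j))⁻¹X(j)ᵀΣ⁻¹`. -/
def Pj : Matrix (Fin n) (Fin n) ℝ :=
  M.Sig⁻¹ * M.Xj * (M.Xjᵀ * M.Sig⁻¹ * M.Xj)⁻¹ * M.Xjᵀ * M.Sig⁻¹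

/-- `P_ω = Σ⁻¹X(ω)(X(ω)ᵀΣ⁻¹X(ω))⁻¹X(ω)ᵀΣ⁻¹`. -/
def Pw : Matrix (Fin n) (Fin n) ℝ :=
  M.Sig⁻¹ * M.Xw * (M.Xwᵀ * M.Sig⁻¹ * M.Xw)⁻¹ * M.Xwᵀ * M.Sig⁻¹

/-- `P̃_j = X̃(j)(X(j)ᵀΣ⁻¹X(j))⁻¹X(j)ᵀΣ⁻¹`. -/
def Ptj : Matrix (Fin M.m) (Fin n) ℝ :=
  M.Xtj * (M.Xjᵀ * M.Sig⁻¹ * M.Xj)⁻¹ * M.Xjᵀ * M.Sig⁻¹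

/-- `B = P̃_jX(ω) − X̃(ω) + Z̃GZᵀ(P_ω − P_j)X(ω)`. -/
def Bmat : Matrix (Fin M.m) (Fin pw) ℝ :=
  M.Ptj * M.Xw - M.Xtw + M.Zt * M.Gm * M.Zᵀ * (M.Pw - M.Pj) * M.Xw

/-- `C = X(ω)ᵀ(P_ω − P_j)X(ω)`. -/
def Cmat : Matrix (Fin pw) (Fin pw) ℝ := M.Xwᵀ * (M.Pw - M.Pj) * M.Xw

/-- `δ = β*ᵀCβ*/(nσ*²)`. -/
def delta : ℝ := (M.beta ⬝ᵥ (M.Cmat *ᵥ M.beta)) / ((n : ℝ) * M.sig2)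

/-- `λ = 1/(1+δ)`. -/
def lam : ℝ := 1 / (1 + M.delta)

/-- the candidate model is overspecified: `X(ω)β*` lies in the column space of `X(j)`. -/
def Overspec : Prop := ∃ c : Fin pj → ℝ, M.Xw *ᵥ M.beta = M.Xj *ᵥ c

/-- the density of the multivariate normal `N_k(μ, s·S)`. -/
def gaussDensity {k : ℕ} (mu : Fin k → ℝ) (s : ℝ) (S : Matrix (Fin k) (Fin k) ℝ)
    (y : Fin k → ℝ) : ℝ :=
  Real.exp (-((y - mu) ⬝ᵥ (S⁻¹ *ᵥ (y - mu))) / (2 * s)) /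
    Real.sqrt ((2 * π * s) ^ k * S.det)

/-- expectation of `h` under the marginal distribution `y ~ N_n(X(ω)β*, σ*²Σ)`. -/
def E (h : (Fin n → ℝ) → ℝ) : ℝ :=
  ∫ y : Fin n → ℝ, h y * gaussDensity (M.Xw *ᵥ M.beta) M.sig2 M.Sig y

/-- the conditional Akaike information under covariate shift,
`cAI = E[m log(2πσ̂_j²) + log|R̃| + tr(R̃⁻¹Λ)σ*²/σ̂_j² + aᵀR̃⁻¹a/σ̂_j²]`. -/
def cAI : ℝ :=
  M.E (fun y => (M.m : ℝ) * Real.log (2 * π * M.sigHat2 y) + Real.log M.Rt.det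
    + (M.Rt⁻¹ * M.Lam).trace * M.sig2 / M.sigHat2 y
    + (M.avec y ⬝ᵥ (M.Rt⁻¹ *ᵥ M.avec y)) / M.sigHat2 y)

/-- `R* = nγ/(n − p_j − 2)`. -/
def Rstar : ℝ := (n : ℝ) * M.gam / ((n : ℝ) - pj - 2)

/-- `R₁ = γ(λ − 1)`. -/
def R1 : ℝ := M.gam * (M.lam - 1)

/-- `R₂ = γ·n⁻¹{−2λ³ + (p_j+4)λ² − (p_j+2)}`. -/
def R2 : ℝ := M.gam * (-2 * M.lam ^ 3 + ((pj : ℝ) + 4) * M.lam ^ 2 - ((pj : ℝ) + 2)) / n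

/-- the quadratic form `bᵀBᵀR̃⁻¹Bb`. -/
def quadB (b : Fin pw → ℝ) : ℝ := b ⬝ᵥ ((M.Bmatᵀ * M.Rt⁻¹ * M.Bmat) *ᵥ b)

/-- `R₃ = λ·β*ᵀBᵀR̃⁻¹Bβ*/σ*²`. -/
def R3 : ℝ := M.lam * M.quadB M.beta / M.sig2

/-- `R₄ = n⁻¹{−2λ³ + (p_j+4)λ²}·β*ᵀBᵀR̃⁻¹Bβ*/σ*²`. -/
def R4 : ℝ := (-2 * M.lam ^ 3 + ((pj : ℝ) + 4) * M.lam ^ 2) * M.quadB M.beta / M.sig2 / n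

/-- `δ(η)` as a function of `η = (β, σ²)`. -/
def deltaF (b : Fin pw → ℝ) (s : ℝ) : ℝ := (b ⬝ᵥ (M.Cmat *ᵥ b)) / ((n : ℝ) * s)

/-- `λ(η) = 1/(1+δ(η))`. -/
def lamF (b : Fin pw → ℝ) (s : ℝ) : ℝ := 1 / (1 + M.deltaF b s)

/-- `R₃(η) = λ(η)·βᵀBᵀR̃⁻¹Bβ/σ²`. -/
def R3F (b : Fin pw → ℝ) (s : ℝ) : ℝ := M.lamF b s * M.quadB b / s

/-- `R₄(η) = n⁻¹{−2λ(η)³ + (p_j+4)λ(η)²}·βᵀBᵀR̃⁻¹Bβ/σ²`. -/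
def R4F (b : Fin pw → ℝ) (s : ℝ) : ℝ :=
  (-2 * (M.lamF b s) ^ 3 + ((pj : ℝ) + 4) * (M.lamF b s) ^ 2) * M.quadB b / s / n

/-- `D = BᵀR̃⁻¹B`. -/
def Dmat : Matrix (Fin pw) (Fin pw) ℝ := M.Bmatᵀ * M.Rt⁻¹ * M.Bmat

/-- `∂²R₃/∂β∂βᵀ` (closed form, Lemma 2). -/
def hessBeta (b : Fin pw → ℝ) (s : ℝ) : Matrix (Fin pw) (Fin pw) ℝ :=
  (M.quadB b / s) •
      ((-(2 / ((n : ℝ) * s * (1 + M.deltaF b s) ^ 2))) • M.Cmat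
        + (8 / ((n : ℝ) ^ 2 * s ^ 2 * (1 + M.deltaF b s) ^ 3)) •
            vecMulVec (M.Cmat *ᵥ b) (M.Cmatᵀ *ᵥ b))
    - ((4 / ((n : ℝ) * s ^ 2 * (1 + M.deltaF b s) ^ 2)) •
        (vecMulVec (M.Dmat *ᵥ b) (M.Cmatᵀ *ᵥ b) + vecMulVec (M.Cmat *ᵥ b) (M.Dmatᵀ *ᵥ b)))
    + (2 * M.lamF b s / s) • M.Dmat

/-- `∂²R₃/(∂σ²)²` (closed form, Lemma 2). -/
def hessSig (b : Fin pw → ℝ) (s : ℝ) : ℝ :=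
  (M.quadB b / s) *
      (-(2 * (b ⬝ᵥ (M.Cmat *ᵥ b)) / ((n : ℝ) * s ^ 3 * (1 + M.deltaF b s) ^ 2))
        + 2 * (b ⬝ᵥ (M.Cmat *ᵥ b)) ^ 2 / ((n : ℝ) ^ 2 * s ^ 4 * (1 + M.deltaF b s) ^ 3))
    - 2 * M.quadB b * (b ⬝ᵥ (M.Cmat *ᵥ b)) / ((n : ℝ) * s ^ 4 * (1 + M.deltaF b s) ^ 2)
    + 2 * M.lamF b s * M.quadB b / s ^ 3

/-- the second-order bias term
`B₁(η) = ½ tr[(∂²R₃/∂β∂βᵀ)(η)·σ²(X(ω)ᵀΣ⁻¹X(ω))⁻¹] + ((σ²)²/(n−p_ω))·(∂²R₃/(∂σ²)²)(η)`. -/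
def B1 (b : Fin pw → ℝ) (s : ℝ) : ℝ :=
  (1 / 2) * (M.hessBeta b s * (s • (M.Xwᵀ * M.Sig⁻¹ * M.Xw)⁻¹)).trace
    + (s ^ 2 / ((n : ℝ) - pw)) * M.hessSig b s

/-- `λ̂ = ((n−p_j)/(n−p_ω))·(σ̂_ω²/σ̂_j²)`. -/
def lamHat (y : Fin n → ℝ) : ℝ :=
  (((n : ℝ) - pj) / ((n : ℝ) - pw)) * (M.sigHatw2 y / M.sigHat2 y)

/-- `λ̂²` (the estimator of `λ²`). -/
def lamHat2 (y : Fin n → ℝ) : ℝ :=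
  (((n : ℝ) - pj) * ((n : ℝ) - pj + 2) / (((n : ℝ) - pw) * ((n : ℝ) - pw + 2)))
    * (M.sigHatw2 y / M.sigHat2 y) ^ 2

/-- `λ̂³` (the estimator of `λ³`). -/
def lamHat3 (y : Fin n → ℝ) : ℝ :=
  (((n : ℝ) - pj) * ((n : ℝ) - pj + 2) * ((n : ℝ) - pj + 4)
      / (((n : ℝ) - pw) * ((n : ℝ) - pw + 2) * ((n : ℝ) - pw + 4)))
    * (M.sigHatw2 y / M.sigHat2 y) ^ 3

/-- `R̂₁ = γ{λ̂ − (−2λ̂³ + (p_j+2)λ̂² − p_jλ̂)/n − 1}`. -/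
def R1Hat (y : Fin n → ℝ) : ℝ :=
  M.gam * (M.lamHat y
    - (-2 * M.lamHat3 y + ((pj : ℝ) + 2) * M.lamHat2 y - (pj : ℝ) * M.lamHat y) / n - 1)

/-- `R̂₂ = γ(−2λ̂³ + (p_j+4)λ̂² − (p_j+2))/n`. -/
def R2Hat (y : Fin n → ℝ) : ℝ :=
  M.gam * (-2 * M.lamHat3 y + ((pj : ℝ) + 4) * M.lamHat2 y - ((pj : ℝ) + 2)) / n

/-- the bias-corrected plug-in estimator `R̃̃₃ = R₃(η̃) − B₁(η̃)`. -/
def R3TT (y : Fin n → ℝ) : ℝ :=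
  M.R3F (M.betaTilde y) (M.sigTilde2 y) - M.B1 (M.betaTilde y) (M.sigTilde2 y)

/-- the plug-in estimator `R̃₄ = R₄(η̃)`. -/
def R4T (y : Fin n → ℝ) : ℝ := M.R4F (M.betaTilde y) (M.sigTilde2 y)

/-- the proposed criterion `cAÎ`. -/
def cAIhat (y : Fin n → ℝ) : ℝ :=
  (M.m : ℝ) * Real.log (2 * π * M.sigHat2 y) + Real.log M.Rt.det
    + M.Rstar + M.R1Hat y + M.R2Hat y + M.R3TT y + M.R4T y

/-- the covariance matrix `ZGZᵀ + I_n` of the parametric bootstrap sample. -/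
def SigBoot : Matrix (Fin n) (Fin n) ℝ := M.Z * M.Gm * M.Zᵀ + 1

/-- bootstrap expectation: `E_{η̃}[h(η̃†)]` where `η̃†` are the full-model GLS estimators
computed from `y† ~ N_n(X(ω)β̃, σ̃²(ZGZᵀ + I_n))`. -/
def Eboot (y : Fin n → ℝ) (h : (Fin pw → ℝ) → ℝ → ℝ) : ℝ :=
  ∫ yd : Fin n → ℝ, h (M.betaTilde yd) (M.sigTilde2 yd) *
    gaussDensity (M.Xw *ᵥ M.betaTilde y) (M.sigTilde2 y) M.SigBoot yd

/-- the bootstrap bias-corrected estimator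
`R̂₃ = 2R₃(η̃) − E_{η̃}[R₃(η̃†)] + E_{η̃}[B₁(η̃†)] − B₁(η̃)`. -/
def R3Hat (y : Fin n → ℝ) : ℝ :=
  2 * M.R3F (M.betaTilde y) (M.sigTilde2 y) - M.Eboot y M.R3F
    + M.Eboot y M.B1 - M.B1 (M.betaTilde y) (M.sigTilde2 y)

/-- the bootstrap bias-corrected estimator `R̂₄ = 2R₄(η̃) − E_{η̃}[R₄(η̃†)]`. -/
def R4Hat (y : Fin n → ℝ) : ℝ :=
  2 * M.R4F (M.betaTilde y) (M.sigTilde2 y) - M.Eboot y M.R4F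

/-- the proposed criterion `cAÎ†`. -/
def cAIhatDag (y : Fin n → ℝ) : ℝ :=
  (M.m : ℝ) * Real.log (2 * π * M.sigHat2 y) + Real.log M.Rt.det
    + M.Rstar + M.R1Hat y + M.R2Hat y + M.R3Hat y + M.R4Hat y

end CSModel

/-! ### Standard Gaussian integrals and inverse chi-square moments -/

section GaussianFacts

open ProbabilityTheory

/-- The standard Gaussian measure on `Fin n → ℝ`. -/
abbrev stdG (n : ℕ) : Measure (Fin n → ℝ) := Measure.pi fun _ => gaussianReal 0 1

lemma stdG_eq_withDensity (n : ℕ) :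
    stdG n = volume.withDensity
      (fun w => ENNReal.ofReal (∏ i, gaussianPDFReal 0 1 (w i))) := by
  refine Measure.pi_eq fun s hs => ?_
  rw [withDensity_apply _ (MeasurableSet.univ_pi hs),
    ← lintegral_indicator (MeasurableSet.univ_pi hs)]
  have hint : ∀ i, Integrable ((s i).indicator (gaussianPDFReal 0 1)) volume := fun i =>
    (integrable_gaussianPDFReal 0 1).indicator (hs i)
  have hnn : ∀ i x, 0 ≤ (s i).indicator (gaussianPDFReal 0 1) x := fun i x =>
    Set.indicator_nonneg (fun y _ => gaussianPDFReal_nonneg 0 1 y) x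
  have hfun : (Set.univ.pi s).indicator
      (fun w : Fin n → ℝ => ENNReal.ofReal (∏ i, gaussianPDFReal 0 1 (w i)))
      = fun w => ENNReal.ofReal (∏ i, (s i).indicator (gaussianPDFReal 0 1) (w i)) := by
    ext w
    by_cases hw : w ∈ Set.univ.pi s
    · rw [Set.indicator_of_mem hw]
      congr 1
      exact Finset.prod_congr rfl fun i _ => by
        rw [Set.indicator_of_mem (hw i (Set.mem_univ i))]
    · rw [Set.indicator_of_notMem hw]
      simp only [Set.mem_univ_pi, not_forall] at hw
      obtain ⟨i, hi⟩ := hw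
      rw [Finset.prod_eq_zero (Finset.mem_univ i) (Set.indicator_of_notMem hi _)]
      simp
  have hprod : Integrable
      (fun w : Fin n → ℝ => ∏ i, (s i).indicator (gaussianPDFReal 0 1) (w i)) volume :=
    Integrable.fintype_prod (f := fun i => (s i).indicator (gaussianPDFReal 0 1)) hint
  rw [hfun, ← ofReal_integral_eq_lintegral_ofReal hprod
    (Eventually.of_forall fun w => Finset.prod_nonneg fun i _ => hnn i _),
    integral_fintype_prod_volume_eq_prod (fun i => (s i).indicator (gaussianPDFReal 0 1)),
    ENNReal.ofReal_prod_of_nonneg fun i _ => integral_nonneg (hnn i)]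
  refine Finset.prod_congr rfl fun i _ => ?_
  rw [integral_indicator (hs i), gaussianReal_apply_eq_integral 0 one_ne_zero]

lemma integral_exp_neg_mul_sq_gaussianReal {t : ℝ} (ht : 0 ≤ t) :
    ∫ x, rexp (-t * x ^ 2) ∂gaussianReal 0 1 = (1 + 2 * t) ^ (-(1 / 2) : ℝ) := by
  rw [integral_gaussianReal_eq_integral_smul one_ne_zero]
  have : ∀ x : ℝ, gaussianPDFReal 0 1 x • rexp (-t * x ^ 2)
      = (√(2 * π))⁻¹ * rexp (-(1 / 2 + t) * x ^ 2) := by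
    intro x
    rw [gaussianPDFReal, smul_eq_mul, mul_assoc, ← Real.exp_add]
    simp only [NNReal.coe_one, mul_one, sub_zero]
    congr 2
    ring
  simp_rw [this]
  rw [integral_const_mul, integral_gaussian, ← Real.sqrt_inv, ← Real.sqrt_mul (by positivity),
    Real.rpow_neg (by positivity), ← Real.sqrt_eq_rpow, ← Real.sqrt_inv]
  congr 1
  have := Real.pi_pos
  field_simp

/-- Change of variables `y = μ + B w`: if `B Bᵀ = s S`, integrating against the density of
`N(μ, s S)` is integrating `w` against the standard Gaussian. -/
lemma integral_gaussDensity {n : ℕ} (h : (Fin n → ℝ) → ℝ) (mu : Fin n → ℝ) {s : ℝ} (hs : 0 < s)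
    (S B : Matrix (Fin n) (Fin n) ℝ) (hB : B * Bᵀ = s • S) (hdet : B.det ≠ 0) :
    ∫ y, h y * CSModel.gaussDensity mu s S y = ∫ w, h (mu + B *ᵥ w) ∂stdG n := by
  have hmeas : Measurable fun w : Fin n → ℝ =>
      ENNReal.ofReal (∏ i, gaussianPDFReal 0 1 (w i)) := by
    refine ENNReal.measurable_ofReal.comp ?_
    exact Finset.measurable_prod _ fun i _ =>
      (measurable_gaussianPDFReal 0 1).comp (measurable_pi_apply i)
  rw [stdG_eq_withDensity, integral_withDensity_eq_integral_toReal_smul hmeas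
    (Eventually.of_forall fun _ => ENNReal.ofReal_lt_top)]
  rw [← integral_add_left_eq_self _ mu]
  have hunit : IsUnit B.det := isUnit_iff_ne_zero.2 hdet
  have hS : S = s⁻¹ • (B * Bᵀ) := by rw [hB, smul_smul, inv_mul_cancel₀ hs.ne', one_smul]
  have hSinv : S⁻¹ = s • ((B⁻¹)ᵀ * B⁻¹) := by
    refine Matrix.inv_eq_right_inv ?_
    rw [hS, smul_mul_smul_comm, inv_mul_cancel₀ hs.ne', one_smul, ← mul_assoc, mul_assoc B,
      ← Matrix.transpose_mul, Matrix.nonsing_inv_mul _ hunit, Matrix.transpose_one, mul_one,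
      Matrix.mul_nonsing_inv _ hunit]
  have hSdet : (2 * π * s) ^ n * S.det = (2 * π) ^ n * B.det ^ 2 := by
    have : B.det ^ 2 = s ^ n * S.det := by
      have := congrArg Matrix.det hB
      rw [Matrix.det_mul, Matrix.det_transpose, Matrix.det_smul, Fintype.card_fin] at this
      rw [← this, sq]
    rw [this, mul_pow]; ring
  have hinj : Function.Injective (Matrix.toLin' B) :=
    Matrix.mulVec_injective_of_isUnit ((Matrix.isUnit_iff_isUnit_det B).2 hunit)
  have hemb : MeasurableEmbedding (Matrix.toLin' B) :=
    (LinearMap.isClosedEmbedding_of_injective (LinearMap.ker_eq_bot.2 hinj)).measurableEmbedding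
  have hvol : (volume : Measure (Fin n → ℝ))
      = ENNReal.ofReal |B.det| • Measure.map (Matrix.toLin' B) volume := by
    rw [Real.map_matrix_volume_pi_eq_smul_volume_pi hdet, smul_smul,
      ← ENNReal.ofReal_mul (abs_nonneg _), ← abs_mul, mul_inv_cancel₀ hdet, abs_one,
      ENNReal.ofReal_one, one_smul]
  conv_lhs => rw [hvol]
  rw [integral_smul_measure, hemb.integral_map, ← integral_smul]
  refine integral_congr_ae (Eventually.of_forall fun w => ?_)
  have hquad : (B *ᵥ w) ⬝ᵥ (S⁻¹ *ᵥ (B *ᵥ w)) = s * ∑ i, w i ^ 2 := by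
    rw [hSinv, Matrix.smul_mulVec, dotProduct_smul, ← Matrix.mulVec_mulVec,
      Matrix.dotProduct_mulVec, Matrix.vecMul_transpose, Matrix.mulVec_mulVec,
      Matrix.nonsing_inv_mul _ hunit, Matrix.one_mulVec, smul_eq_mul]
    simp [dotProduct, sq]
  have hsqrt : √((2 * π * s) ^ n * S.det) = √(2 * π) ^ n * |B.det| := by
    rw [hSdet, Real.sqrt_mul (by positivity), Real.sqrt_sq_eq_abs]
    congr 1
    rw [Real.sqrt_eq_iff_mul_self_eq (by positivity) (by positivity), ← mul_pow,
      Real.mul_self_sqrt (by positivity)]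
  have hpdf : ∏ i, gaussianPDFReal 0 1 (w i)
      = (√(2 * π) ^ n)⁻¹ * rexp (-(∑ i, w i ^ 2) / 2) := by
    simp only [gaussianPDFReal, NNReal.coe_one, mul_one, sub_zero, Finset.prod_mul_distrib,
      Finset.prod_const, Finset.card_univ, Fintype.card_fin, ← Real.exp_sum, inv_pow]
    congr 2
    rw [← Finset.sum_div, Finset.sum_neg_distrib]
  have hpos : 0 < |B.det| := abs_pos.2 hdet
  have hpi : 0 < √(2 * π) := by positivity
  simp only [Matrix.toLin'_apply, CSModel.gaussDensity, add_sub_cancel_left, smul_eq_mul]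
  rw [ENNReal.toReal_ofReal hpos.le, ENNReal.toReal_ofReal
    (Finset.prod_nonneg fun i _ => gaussianPDFReal_nonneg 0 1 _), hquad, hsqrt, hpdf,
    show -(s * ∑ i, w i ^ 2) / (2 * s) = -(∑ i, w i ^ 2) / 2 by field_simp]
  field_simp

lemma lintegral_one_add_two_mul_rpow {k : ℝ} (hk : 2 < k) :
    ∫⁻ t in Set.Ioi (0 : ℝ), ENNReal.ofReal ((1 + 2 * t) ^ (-(k / 2)))
      = ENNReal.ofReal (1 / (k - 2)) := by
  set g : ℝ → ℝ := fun t => -(1 / (k - 2)) * (1 + 2 * t) ^ (-(k / 2 - 1))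
  have hk2 : k - 2 ≠ 0 := by linarith
  have hderiv : ∀ t ∈ Set.Ici (0 : ℝ), HasDerivAt g ((1 + 2 * t) ^ (-(k / 2))) t := by
    intro t ht
    have ht0 : (0 : ℝ) ≤ t := ht
    have h1 : HasDerivAt (fun t : ℝ => 1 + 2 * t) 2 t := by
      simpa using ((hasDerivAt_id t).const_mul (2 : ℝ)).const_add 1
    have h2 := (h1.rpow_const (p := -(k / 2 - 1)) (Or.inl (by positivity))).const_mul
      (-(1 / (k - 2)))
    refine h2.congr_deriv ?_
    rw [show -(k / 2 - 1) - 1 = -(k / 2) by ring]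
    field_simp
  have hpos : ∀ t ∈ Set.Ioi (0 : ℝ), 0 ≤ (1 + 2 * t) ^ (-(k / 2)) := by
    intro t ht
    have ht0 : (0 : ℝ) < t := ht
    positivity
  have hlim : Tendsto g atTop (nhds 0) := by
    have h1 : Tendsto (fun t : ℝ => 1 + 2 * t) atTop atTop :=
      tendsto_atTop_add_const_left _ _ (tendsto_id.const_mul_atTop two_pos)
    have h2 := ((tendsto_rpow_neg_atTop (y := k / 2 - 1) (by linarith)).comp h1).const_mul
      (-(1 / (k - 2)))
    rw [mul_zero] at h2
    exact h2
  have hint := integrableOn_Ioi_deriv_of_nonneg' hderiv hpos hlim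
  rw [← ofReal_integral_eq_lintegral_ofReal hint
    ((ae_restrict_mem measurableSet_Ioi).mono hpos),
    integral_Ioi_of_hasDerivAt_of_nonneg' hderiv hpos hlim]
  simp [g]

/-- Laplace transform of the chi-square law with `|T|` degrees of freedom. -/
lemma lintegral_exp_neg_mul_chiSq {n : ℕ} (T : Finset (Fin n)) {t : ℝ} (ht : 0 ≤ t) :
    ∫⁻ w, ENNReal.ofReal (rexp (-t * ∑ i ∈ T, w i ^ 2)) ∂stdG n
      = ENNReal.ofReal ((1 + 2 * t) ^ (-((T.card : ℝ) / 2))) := by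
  have hprod : ∀ w : Fin n → ℝ, rexp (-t * ∑ i ∈ T, w i ^ 2)
      = ∏ i, (if i ∈ T then fun x : ℝ => rexp (-t * x ^ 2) else fun _ => 1) (w i) := by
    intro w
    rw [Finset.mul_sum, Real.exp_sum, ← Finset.prod_subset (Finset.subset_univ T)]
    · exact Finset.prod_congr rfl fun i hi => by simp [hi]
    · intro i _ hi
      simp [hi]
  have hint : Integrable (fun w : Fin n → ℝ => rexp (-t * ∑ i ∈ T, w i ^ 2)) (stdG n) := by
    refine Integrable.of_bound (C := 1) (Measurable.aestronglyMeasurable (by fun_prop))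
      (Eventually.of_forall fun w => ?_)
    rw [Real.norm_eq_abs, Real.abs_exp, Real.exp_le_one_iff]
    have : 0 ≤ ∑ i ∈ T, w i ^ 2 := Finset.sum_nonneg fun i _ => sq_nonneg _
    nlinarith
  rw [← ofReal_integral_eq_lintegral_ofReal hint (Eventually.of_forall fun w => (exp_pos _).le)]
  simp_rw [hprod]
  rw [integral_fintype_prod_eq_prod
    (fun i => if i ∈ T then fun x : ℝ => rexp (-t * x ^ 2) else fun _ => 1)]
  congr 1
  have : ∀ i : Fin n, ∫ x, (if i ∈ T then fun x : ℝ => rexp (-t * x ^ 2) else fun _ => 1) x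
      ∂gaussianReal 0 1 = if i ∈ T then (1 + 2 * t) ^ (-(1 / 2) : ℝ) else 1 := by
    intro i
    split_ifs
    · exact integral_exp_neg_mul_sq_gaussianReal ht
    · simp
  simp_rw [this]
  rw [Finset.prod_ite_mem, Finset.univ_inter, Finset.prod_const, ← Real.rpow_natCast,
    ← Real.rpow_mul (by positivity)]
  congr 1
  ring

lemma ae_chiSq_pos {n : ℕ} {T : Finset (Fin n)} (hT : 0 < T.card) :
    ∀ᵐ w ∂stdG n, 0 < ∑ i ∈ T, w i ^ 2 := by
  obtain ⟨i, hi⟩ := Finset.card_pos.1 hT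
  have : NullSingletonClass (gaussianReal 0 1) := nullSingletonClass_gaussianReal one_ne_zero
  have h0 : ∀ᵐ x ∂gaussianReal 0 1, x ≠ 0 := by
    simp [ae_iff]
  have h1 : ∀ᵐ w ∂stdG n, w i ≠ 0 :=
    (measurePreserving_eval (fun _ : Fin n => gaussianReal 0 1) i).quasiMeasurePreserving.ae h0
  filter_upwards [h1] with w hw
  exact Finset.sum_pos' (fun j _ => sq_nonneg _) ⟨i, hi, by positivity⟩

/-- The mean of an inverse chi-square variable with `k > 2` degrees of freedom is `1 / (k - 2)`.
It follows from `1 / Q = ∫₀^∞ exp (-t Q) dt`, Tonelli, and the Laplace transform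
`(1 + 2 t) ^ (-k / 2)` of the chi-square law. -/
lemma lintegral_inv_chiSq {n : ℕ} (T : Finset (Fin n)) (hT : 2 < T.card) :
    ∫⁻ w, ENNReal.ofReal (1 / ∑ i ∈ T, w i ^ 2) ∂stdG n
      = ENNReal.ofReal (1 / ((T.card : ℝ) - 2)) := by
  have h1 : ∀ᵐ w ∂stdG n, ENNReal.ofReal (1 / ∑ i ∈ T, w i ^ 2)
      = ∫⁻ t in Set.Ioi (0 : ℝ), ENNReal.ofReal (rexp (-t * ∑ i ∈ T, w i ^ 2)) := by
    filter_upwards [ae_chiSq_pos (T := T) (by omega)] with w hw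
    have hneg : -(∑ i ∈ T, w i ^ 2) < 0 := by linarith
    have heq : ∀ t : ℝ, -t * ∑ i ∈ T, w i ^ 2 = -(∑ i ∈ T, w i ^ 2) * t := fun t => by ring
    simp_rw [heq]
    rw [← ofReal_integral_eq_lintegral_ofReal (integrableOn_exp_mul_Ioi hneg 0)
      (Eventually.of_forall fun t => (exp_pos _).le), integral_exp_mul_Ioi hneg]
    simp
  rw [lintegral_congr_ae h1, lintegral_lintegral_swap (by fun_prop)]
  rw [setLIntegral_congr_fun measurableSet_Ioi
    (fun t ht => lintegral_exp_neg_mul_chiSq T (le_of_lt ht))]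
  exact lintegral_one_add_two_mul_rpow (by exact_mod_cast hT)

lemma inv_chiSq_nonneg {n : ℕ} (T : Finset (Fin n)) (w : Fin n → ℝ) :
    0 ≤ 1 / ∑ i ∈ T, w i ^ 2 :=
  one_div_nonneg.2 (Finset.sum_nonneg fun _ _ => sq_nonneg _)

lemma measurable_inv_chiSq {n : ℕ} (T : Finset (Fin n)) :
    Measurable fun w : Fin n → ℝ => 1 / ∑ i ∈ T, w i ^ 2 := by fun_prop

lemma integrable_inv_chiSq {n : ℕ} (T : Finset (Fin n)) (hT : 2 < T.card) :
    Integrable (fun w => 1 / ∑ i ∈ T, w i ^ 2) (stdG n) := by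
  refine (lintegral_ofReal_ne_top_iff_integrable
    (measurable_inv_chiSq T).aestronglyMeasurable
    (Eventually.of_forall (inv_chiSq_nonneg T))).1 ?_
  rw [lintegral_inv_chiSq T hT]
  exact ENNReal.ofReal_ne_top

lemma integral_inv_chiSq {n : ℕ} (T : Finset (Fin n)) (hT : 2 < T.card) :
    ∫ w, 1 / ∑ i ∈ T, w i ^ 2 ∂stdG n = 1 / ((T.card : ℝ) - 2) := by
  have h2 : (2 : ℝ) < T.card := by exact_mod_cast hT
  rw [integral_eq_lintegral_of_nonneg_ae (Eventually.of_forall (inv_chiSq_nonneg T))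
    (measurable_inv_chiSq T).aestronglyMeasurable, lintegral_inv_chiSq T hT,
    ENNReal.toReal_ofReal (one_div_nonneg.2 (by linarith))]

lemma memLp_eval_stdG {n : ℕ} (i : Fin n) : MemLp (fun w : Fin n → ℝ => w i) 2 (stdG n) :=
  (memLp_id_gaussianReal' 2 (by simp)).comp_measurePreserving
    (measurePreserving_eval (fun _ : Fin n => gaussianReal 0 1) i)

lemma integral_eval_stdG {n : ℕ} (i : Fin n) (f : ℝ → ℝ) (hf : Measurable f) :
    ∫ w : Fin n → ℝ, f (w i) ∂stdG n = ∫ x, f x ∂gaussianReal 0 1 := by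
  have h := (measurePreserving_eval (fun _ : Fin n => gaussianReal 0 1) i).map_eq
  conv_rhs => rw [← h]
  rw [integral_map (measurable_pi_apply i).aemeasurable hf.aestronglyMeasurable]

lemma iIndepFun_eval_stdG (n : ℕ) :
    iIndepFun (fun (i : Fin n) (w : Fin n → ℝ) => w i) (stdG n) :=
  iIndepFun_pi (X := fun _ x => x) fun _ => aemeasurable_id

lemma integrable_mul_stdG {n : ℕ} (i j : Fin n) :
    Integrable (fun w : Fin n → ℝ => w i * w j) (stdG n) :=
  (memLp_eval_stdG i).integrable_mul (memLp_eval_stdG j)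

lemma integral_mul_stdG {n : ℕ} (i j : Fin n) :
    ∫ w : Fin n → ℝ, w i * w j ∂stdG n = if i = j then 1 else 0 := by
  split_ifs with h
  · subst h
    rw [integral_eval_stdG i (fun x => x * x) (by fun_prop)]
    have hv := variance_fun_id_gaussianReal (μ := 0) (v := 1)
    rw [variance_eq_integral (by fun_prop)] at hv
    simpa [sq] using hv
  · rw [((iIndepFun_eval_stdG n).indepFun h).integral_fun_mul_eq_mul_integral
      (measurable_pi_apply i).aestronglyMeasurable (measurable_pi_apply j).aestronglyMeasurable,
      integral_eval_stdG i (fun x => x) measurable_id]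
    simp

/-- Coordinates outside `T` are independent of `∑ i ∈ T, w i ^ 2`. -/
lemma indepFun_mul_inv_chiSq {n : ℕ} {T : Finset (Fin n)} {i j : Fin n} (hi : i ∉ T)
    (hj : j ∉ T) :
    IndepFun (fun w : Fin n → ℝ => w i * w j) (fun w => 1 / ∑ l ∈ T, w l ^ 2) (stdG n) := by
  have h := (iIndepFun_eval_stdG n).indepFun_finset ({i, j} : Finset (Fin n)) T
    (by simp [hi, hj]) (fun _ => by fun_prop)
  have h' := h.comp
    (φ := fun v : ({i, j} : Finset (Fin n)) → ℝ => v ⟨i, by simp⟩ * v ⟨j, by simp⟩)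
    (ψ := fun v : T → ℝ => 1 / ∑ l, v l ^ 2) (by fun_prop) (by fun_prop)
  convert! h' using 2
  simp only [Function.comp]
  rw [Finset.sum_coe_sort T (fun l => (_ : Fin n → ℝ) l ^ 2)]

lemma integrable_mul_inv_chiSq {n : ℕ} {T : Finset (Fin n)} (hT : 2 < T.card) {i j : Fin n}
    (hi : i ∉ T) (hj : j ∉ T) :
    Integrable (fun w : Fin n → ℝ => w i * w j * (1 / ∑ l ∈ T, w l ^ 2)) (stdG n) :=
  (indepFun_mul_inv_chiSq hi hj).integrable_mul (integrable_mul_stdG i j)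
    (integrable_inv_chiSq T hT)

lemma integral_mul_inv_chiSq {n : ℕ} {T : Finset (Fin n)} (hT : 2 < T.card) {i j : Fin n}
    (hi : i ∉ T) (hj : j ∉ T) :
    ∫ w : Fin n → ℝ, w i * w j * (1 / ∑ l ∈ T, w l ^ 2) ∂stdG n
      = (if i = j then 1 else 0) * (1 / ((T.card : ℝ) - 2)) := by
  rw [(indepFun_mul_inv_chiSq hi hj).integral_fun_mul_eq_mul_integral
    (integrable_mul_stdG i j).aestronglyMeasurable
    (integrable_inv_chiSq T hT).aestronglyMeasurable, integral_mul_stdG, integral_inv_chiSq T hT]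

/-- A quadratic form in the coordinates outside `T`, divided by the chi-square variable on `T`,
has mean `tr K / (|T| - 2)`. -/
lemma quadForm_div_chiSq {n : ℕ} {T : Finset (Fin n)} (hT : 2 < T.card)
    {K : Matrix (Fin n) (Fin n) ℝ} (hK : ∀ i j, i ∈ T ∨ j ∈ T → K i j = 0) :
    Integrable (fun w => (w ⬝ᵥ (K *ᵥ w)) * (1 / ∑ l ∈ T, w l ^ 2)) (stdG n) ∧
      ∫ w, (w ⬝ᵥ (K *ᵥ w)) * (1 / ∑ l ∈ T, w l ^ 2) ∂stdG n
        = K.trace * (1 / ((T.card : ℝ) - 2)) := by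
  have hexp : ∀ w : Fin n → ℝ, (w ⬝ᵥ (K *ᵥ w)) * (1 / ∑ l ∈ T, w l ^ 2)
      = ∑ i, ∑ j, K i j * (w i * w j * (1 / ∑ l ∈ T, w l ^ 2)) := by
    intro w
    simp only [dotProduct, Matrix.mulVec, Finset.mul_sum, Finset.sum_mul]
    exact Finset.sum_congr rfl fun i _ => Finset.sum_congr rfl fun j _ => by ring
  have hterm : ∀ i j, Integrable
      (fun w : Fin n → ℝ => K i j * (w i * w j * (1 / ∑ l ∈ T, w l ^ 2))) (stdG n) ∧
      ∫ w : Fin n → ℝ, K i j * (w i * w j * (1 / ∑ l ∈ T, w l ^ 2)) ∂stdG n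
        = K i j * ((if i = j then 1 else 0) * (1 / ((T.card : ℝ) - 2))) := by
    intro i j
    by_cases hij : i ∈ T ∨ j ∈ T
    · simp [hK i j hij]
    · push Not at hij
      exact ⟨(integrable_mul_inv_chiSq hT hij.1 hij.2).const_mul _, by
        rw [integral_const_mul, integral_mul_inv_chiSq hT hij.1 hij.2]⟩
  simp_rw [hexp]
  refine ⟨integrable_finsetSum _ fun i _ => integrable_finsetSum _ fun j _ => (hterm i j).1, ?_⟩
  rw [integral_finsetSum _ fun i _ => integrable_finsetSum _ fun j _ => (hterm i j).1]
  simp_rw [integral_finsetSum _ fun j _ => (hterm _ j).1, fun i j => (hterm i j).2]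
  simp [Matrix.trace, Finset.sum_mul]

/-- Integrability follows from `|log x| ≤ x + 1 / x`. -/
lemma integrable_log_mul_chiSq {n : ℕ} {T : Finset (Fin n)} (hT : 2 < T.card) {c : ℝ}
    (hc : 0 < c) :
    Integrable (fun w : Fin n → ℝ => Real.log (c * ∑ l ∈ T, w l ^ 2)) (stdG n) := by
  have hQ : Integrable (fun w : Fin n → ℝ => ∑ l ∈ T, w l ^ 2) (stdG n) :=
    integrable_finsetSum _ fun i _ => (memLp_eval_stdG i).integrable_sq
  refine ((hQ.const_mul c).add ((integrable_inv_chiSq T hT).const_mul c⁻¹)).mono'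
    (Measurable.aestronglyMeasurable (by fun_prop)) ?_
  filter_upwards [ae_chiSq_pos (T := T) (by omega)] with w hw
  have hx : 0 < c * ∑ l ∈ T, w l ^ 2 := mul_pos hc hw
  have h1 := Real.log_le_self hx.le
  have h2 := Real.log_le_self (inv_pos.2 hx).le
  rw [Real.log_inv] at h2
  have h3 : c⁻¹ * (1 / ∑ l ∈ T, w l ^ 2) = (c * ∑ l ∈ T, w l ^ 2)⁻¹ := by
    rw [mul_inv, one_div]
  have h4 := inv_pos.2 hx
  rw [Real.norm_eq_abs, abs_le, Pi.add_apply, h3]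
  constructor <;> linarith

end GaussianFacts

/-! ### Factorisations and projections -/

section LinearAlgebra

lemma isUnit_det_gram_of_rank {n p : ℕ} {Y : Matrix (Fin n) (Fin p) ℝ} (hY : Y.rank = p) :
    IsUnit (Yᵀ * Y).det := by
  have h : (Yᵀ * Y).rank = p := by rw [Matrix.rank_transpose_mul_self, hY]
  rw [← Matrix.isUnit_iff_isUnit_det, ← Matrix.mulVec_surjective_iff_isUnit]
  have htop : LinearMap.range (Yᵀ * Y).mulVecLin = ⊤ :=
    Submodule.eq_top_of_finrank_eq (by rw [← Matrix.rank, h]; simp)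
  exact LinearMap.range_eq_top.1 htop

open scoped MatrixOrder Matrix.Norms.L2Operator in
lemma exists_eq_mul_transpose {n : ℕ} {S : Matrix (Fin n) (Fin n) ℝ} (hS : S.PosDef) :
    ∃ C : Matrix (Fin n) (Fin n) ℝ, C * Cᵀ = S ∧ IsUnit C.det := by
  obtain ⟨B, hB⟩ := CStarAlgebra.nonneg_iff_eq_star_mul_self.mp hS.posSemidef.nonneg
  have hB' : S = Bᵀ * B := by
    rw [hB, Matrix.star_eq_conjTranspose, Matrix.conjTranspose_eq_transpose_of_trivial]
  refine ⟨Bᵀ, by rw [Matrix.transpose_transpose, hB'], ?_⟩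
  have hdet := hS.det_pos.ne'
  rw [hB', Matrix.det_mul] at hdet
  exact isUnit_iff_ne_zero.2 (left_ne_zero_of_mul hdet)

/-- The orthogonal projection `Y (YᵀY)⁻¹ Yᵀ` onto the column space of a full-rank `n × p` matrix
is diagonal with entries `0` and `1` in an orthonormal basis; `T` is the set of the `n - p` indices
carrying the eigenvalue `0`. -/
lemma exists_diag_proj {n p : ℕ} {Y : Matrix (Fin n) (Fin p) ℝ} (hY : Y.rank = p) :
    ∃ (U : Matrix (Fin n) (Fin n) ℝ) (T : Finset (Fin n)), Uᵀ * U = 1 ∧ T.card + p = n ∧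
      Y * ((Yᵀ * Y)⁻¹ * Yᵀ) = U * Matrix.diagonal (fun i => if i ∈ T then 0 else 1) * Uᵀ := by
  have hu := isUnit_det_gram_of_rank hY
  set P := Y * ((Yᵀ * Y)⁻¹ * Yᵀ) with hP
  have hHY : ((Yᵀ * Y)⁻¹ * Yᵀ) * Y = 1 := by
    rw [Matrix.mul_assoc, Matrix.nonsing_inv_mul _ hu]
  have hPP : P * P = P := by
    rw [hP, Matrix.mul_assoc, ← Matrix.mul_assoc _ Y, hHY, Matrix.one_mul]
  have hherm : P.IsHermitian := by
    rw [Matrix.IsHermitian, Matrix.conjTranspose_eq_transpose_of_trivial, hP]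
    simp only [Matrix.transpose_mul, Matrix.transpose_transpose, Matrix.transpose_nonsing_inv,
      Matrix.mul_assoc]
  have htr : P.trace = p := by
    rw [hP, Matrix.trace_mul_comm, hHY, Matrix.trace_one, Fintype.card_fin]
  set U : Matrix (Fin n) (Fin n) ℝ := hherm.eigenvectorUnitary.1 with hU
  set ev := hherm.eigenvalues with hev
  have hstar : star U = Uᵀ := by
    rw [Matrix.star_eq_conjTranspose, Matrix.conjTranspose_eq_transpose_of_trivial]
  have hUU : Uᵀ * U = 1 := by
    rw [← hstar]
    exact Unitary.coe_star_mul_self hherm.eigenvectorUnitary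
  have hUU' : U * Uᵀ = 1 := mul_eq_one_comm.1 hUU
  have hspec : P = U * Matrix.diagonal ev * Uᵀ := by
    have h := hherm.spectral_theorem
    rw [Unitary.conjStarAlgAut_apply] at h
    rw [← hstar]
    exact h
  have hD : Matrix.diagonal ev = Uᵀ * P * U := by
    rw [hspec]
    calc Matrix.diagonal ev = (Uᵀ * U) * Matrix.diagonal ev * (Uᵀ * U) := by
          rw [hUU, one_mul, mul_one]
      _ = _ := by simp only [mul_assoc]
  have hidem : ∀ i, ev i * ev i = ev i := by
    have h : Matrix.diagonal ev * Matrix.diagonal ev = Matrix.diagonal ev := by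
      rw [hD]
      calc Uᵀ * P * U * (Uᵀ * P * U) = Uᵀ * (P * (U * Uᵀ) * P) * U := by simp only [mul_assoc]
        _ = _ := by rw [hUU', mul_one, hPP]
    intro i
    have := congrFun (congrFun h i) i
    simpa [Matrix.diagonal_mul_diagonal] using this
  set T : Finset (Fin n) := Finset.univ.filter fun i => ev i = 0 with hT
  have hevT : ev = fun i => if i ∈ T then 0 else 1 := by
    ext i
    by_cases hi : ev i = 0
    · simp [hT, hi]
    · simpa [hT, hi] using mul_right_cancel₀ hi ((hidem i).trans (one_mul _).symm)
  refine ⟨U, T, hUU, ?_, by rw [← hevT]; exact hspec⟩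
  have hsum : (p : ℝ) = ∑ i, if i ∈ T then (0 : ℝ) else 1 := by
    rw [← htr, hspec, mul_assoc, Matrix.trace_mul_comm, mul_assoc, hUU, mul_one,
      Matrix.trace_diagonal, hevT]
  have hcard : (∑ i, if i ∈ T then (0 : ℝ) else 1) + T.card = n := by
    have : (T.card : ℝ) = ∑ i, if i ∈ T then (1 : ℝ) else 0 := by simp
    rw [this, ← Finset.sum_add_distrib]
    calc ∑ i, ((if i ∈ T then (0 : ℝ) else 1) + if i ∈ T then (1 : ℝ) else 0)
        = ∑ _i : Fin n, (1 : ℝ) := Finset.sum_congr rfl fun i _ => by split_ifs <;> simp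
      _ = n := by simp
  rw [← hsum] at hcard
  have : p + T.card = n := by exact_mod_cast hcard
  omega

end LinearAlgebra

/-! ### Canonical form of an overspecified model -/

namespace CSModel

variable {pw pj n : ℕ} (M : CSModel pw pj n)

lemma Sig_posDef : M.Sig.PosDef := by
  have h := M.hG.posSemidef.mul_mul_conjTranspose_same M.Z
  rw [Matrix.conjTranspose_eq_transpose_of_trivial] at h
  exact Matrix.PosDef.posSemidef_add h M.hR

/-- As `X(ω)` is injective, `X(ω)β* = X(j)c` forces `β*` to be `c` padded by zeros, so the
prediction means agree too. -/
lemma Xtw_beta_eq {c : Fin pj → ℝ} (hc : M.Xw *ᵥ M.beta = M.Xj *ᵥ c) :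
    M.Xtw *ᵥ M.beta = M.Xtj *ᵥ c := by
  -- `Q` pads a vector indexed by `j` with zeros.
  set Q : Matrix (Fin pw) (Fin pj) ℝ := (1 : Matrix (Fin pw) (Fin pw) ℝ).submatrix id M.emb
  have h1 : M.Xj = M.Xw * Q := by
    ext i j
    simp [Q, Xj, Matrix.mul_apply, Matrix.one_apply]
  have h2 : M.Xtj = M.Xtw * Q := by
    ext i j
    simp [Q, Xtj, Matrix.mul_apply, Matrix.one_apply]
  have hu := isUnit_det_gram_of_rank M.hrankw
  have hb : M.beta = Q *ᵥ c := by
    rw [h1, ← Matrix.mulVec_mulVec] at hc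
    have := congrArg (fun v => (M.Xwᵀ * M.Xw)⁻¹ *ᵥ (M.Xwᵀ *ᵥ v)) hc
    simpa only [Matrix.mulVec_mulVec, ← Matrix.mul_assoc, Matrix.mul_assoc _ M.Xwᵀ M.Xw,
      Matrix.nonsing_inv_mul _ hu, Matrix.one_mulVec, Matrix.one_mul] using this
  rw [h2, hb, Matrix.mulVec_mulVec]

/-- Canonical form of an overspecified model: in suitable standard Gaussian coordinates `w`, the
variance estimator is a multiple of a chi-square sum over a set `T` of `n - p_j` coordinates, and
`aᵀR̃⁻¹a` is a quadratic form in the complementary coordinates. -/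
lemma exists_canonical (hover : M.Overspec) :
    ∃ (T : Finset (Fin n)) (K : Matrix (Fin n) (Fin n) ℝ) (φ : (Fin n → ℝ) → (Fin n → ℝ)),
      T.card + pj = n ∧ (∀ i j, i ∈ T ∨ j ∈ T → K i j = 0) ∧
      K.trace = (M.Rt⁻¹ * M.Amat * (M.Xjᵀ * M.Sig⁻¹ * M.Xj)⁻¹ * M.Amatᵀ).trace ∧
      (∀ h : (Fin n → ℝ) → ℝ, M.E h = ∫ w, h (φ w) ∂stdG n) ∧
      (∀ w, M.sigHat2 (φ w) = M.sig2 / n * ∑ i ∈ T, w i ^ 2) ∧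
      ∀ w, M.avec (φ w) ⬝ᵥ (M.Rt⁻¹ *ᵥ M.avec (φ w)) = M.sig2 * (w ⬝ᵥ (K *ᵥ w)) := by
  obtain ⟨c, hc⟩ := hover
  obtain ⟨C, hCS, hCu⟩ := exists_eq_mul_transpose M.Sig_posDef
  have hCC : C⁻¹ * C = 1 := Matrix.nonsing_inv_mul _ hCu
  have hCC' : C * C⁻¹ = 1 := Matrix.mul_nonsing_inv _ hCu
  have hSinv : M.Sig⁻¹ = (C⁻¹)ᵀ * C⁻¹ := by
    refine Matrix.inv_eq_right_inv ?_
    rw [← hCS, ← mul_assoc, mul_assoc C, ← Matrix.transpose_mul, hCC, Matrix.transpose_one,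
      mul_one, hCC']
  obtain ⟨Y, hYdef⟩ : ∃ Y : Matrix (Fin n) (Fin pj) ℝ, Y = C⁻¹ * M.Xj := ⟨_, rfl⟩
  have hX : M.Xj = C * Y := by rw [hYdef, ← Matrix.mul_assoc, hCC', Matrix.one_mul]
  have hYrank : Y.rank = pj := by
    rw [hYdef, Matrix.rank_mul_eq_right_of_isUnit_det _ _
      (by rw [Matrix.det_nonsing_inv]; exact hCu.ringInverse)]
    exact M.hrankj
  have hgram : M.Xjᵀ * M.Sig⁻¹ * M.Xj = Yᵀ * Y := by
    rw [hSinv, hYdef, Matrix.transpose_mul]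
    simp only [Matrix.mul_assoc]
  have hu := isUnit_det_gram_of_rank hYrank
  obtain ⟨U, T, hUU, hcard, hproj⟩ := exists_diag_proj hYrank
  have hUU' : U * Uᵀ = 1 := mul_eq_one_comm.1 hUU
  obtain ⟨H, hH⟩ : ∃ H : Matrix (Fin pj) (Fin n) ℝ, H = (Yᵀ * Y)⁻¹ * Yᵀ := ⟨_, rfl⟩
  rw [← hH] at hproj
  set D : Matrix (Fin n) (Fin n) ℝ := Matrix.diagonal (fun i => if i ∈ T then 0 else 1) with hD
  have hHY : H * Y = 1 := by
    rw [hH, Matrix.mul_assoc, Matrix.nonsing_inv_mul _ hu]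
  have hHH : H * Hᵀ = (Yᵀ * Y)⁻¹ := by
    rw [hH, Matrix.transpose_mul, Matrix.transpose_transpose, ← Matrix.mul_assoc,
      Matrix.mul_assoc _ Yᵀ Y, Matrix.nonsing_inv_mul _ hu, Matrix.one_mul,
      Matrix.transpose_nonsing_inv, Matrix.transpose_mul, Matrix.transpose_transpose]
  have hgls : M.gls = H * C⁻¹ := by
    rw [gls, hgram, hH, hSinv, hYdef, Matrix.transpose_mul]
    simp only [Matrix.mul_assoc]
  have hYHU : Y * H * U = U * D := by
    rw [hproj, Matrix.mul_assoc, hUU, Matrix.mul_one]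
  have hHUD : H * U * D = H * U := by
    rw [Matrix.mul_assoc, ← hYHU, ← Matrix.mul_assoc, ← Matrix.mul_assoc, hHY, Matrix.one_mul]
  set r := √M.sig2 with hr
  have hrr : r * r = M.sig2 := Real.mul_self_sqrt M.hsig.le
  have hbeta : ∀ w, M.betaHat (M.Xw *ᵥ M.beta + (r • (C * U)) *ᵥ w) = c + r • ((H * U) *ᵥ w) := by
    intro w
    rw [betaHat, hgls, hc, hX, Matrix.mulVec_add, Matrix.mulVec_mulVec, Matrix.mulVec_mulVec,
      Matrix.mul_smul, Matrix.smul_mulVec]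
    have e1 : H * C⁻¹ * (C * Y) = 1 := by
      rw [Matrix.mul_assoc, ← Matrix.mul_assoc C⁻¹, hCC, Matrix.one_mul, hHY]
    have e2 : H * C⁻¹ * (C * U) = H * U := by
      rw [Matrix.mul_assoc, ← Matrix.mul_assoc C⁻¹, hCC, Matrix.one_mul]
    rw [e1, e2, Matrix.one_mulVec]
  -- `a = σ* F w`; multiplying by `D` on the right erases the columns in `T`, so these vanish in `F`.
  obtain ⟨F, hF⟩ : ∃ F : Matrix (Fin M.m) (Fin n) ℝ, F = M.Amat * (H * U) := ⟨_, rfl⟩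
  have hFD : F * D = F := by rw [hF, Matrix.mul_assoc, hHUD]
  have hFT : ∀ a i, i ∈ T → F a i = 0 := by
    intro a i hi
    rw [← hFD, hD, Matrix.mul_diagonal]
    simp [hi]
  refine ⟨T, Fᵀ * M.Rt⁻¹ * F, fun w => M.Xw *ᵥ M.beta + (r • (C * U)) *ᵥ w, hcard, ?_, ?_, ?_,
    ?_, ?_⟩
  · rintro i j (hi | hj)
    · rw [Matrix.mul_assoc, Matrix.mul_apply]
      exact Finset.sum_eq_zero fun a _ => by rw [Matrix.transpose_apply, hFT a i hi, zero_mul]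
    · rw [Matrix.mul_apply]
      exact Finset.sum_eq_zero fun a _ => by rw [hFT a j hj, mul_zero]
  · rw [hgram, Matrix.mul_assoc, Matrix.trace_mul_comm, ← hHH]
    congr 1
    have : F * Fᵀ = M.Amat * (H * Hᵀ) * M.Amatᵀ := by
      rw [hF, Matrix.transpose_mul, Matrix.transpose_mul]
      calc M.Amat * (H * U) * (Uᵀ * Hᵀ * M.Amatᵀ)
          = M.Amat * (H * (U * Uᵀ) * Hᵀ) * M.Amatᵀ := by simp only [Matrix.mul_assoc]
        _ = _ := by rw [hUU', Matrix.mul_one]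
    rw [Matrix.mul_assoc, this]
    simp only [Matrix.mul_assoc]
  · intro h
    refine integral_gaussDensity h _ M.hsig _ _ ?_ ?_
    · rw [Matrix.transpose_smul, smul_mul_smul_comm, hrr, Matrix.transpose_mul, ← mul_assoc,
        mul_assoc C, hUU', mul_one, hCS]
    · have hdetU : U.det ≠ 0 := by
        intro h0
        have := congrArg Matrix.det hUU
        rw [Matrix.det_mul, h0, mul_zero, Matrix.det_one] at this
        exact zero_ne_one this
      rw [Matrix.det_smul, Matrix.det_mul]
      exact mul_ne_zero (pow_ne_zero _ (Real.sqrt_pos.2 M.hsig).ne')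
        (mul_ne_zero hCu.ne_zero hdetU)
  · intro w
    have hres : M.resid (M.Xw *ᵥ M.beta + (r • (C * U)) *ᵥ w)
        = r • (C *ᵥ (U *ᵥ ((1 - D) *ᵥ w))) := by
      have e : C * U * (1 - D) = C * U - M.Xj * (H * U) := by
        rw [Matrix.mul_assoc, Matrix.mul_sub, Matrix.mul_one, ← hYHU, Matrix.mul_sub, hX]
        simp only [Matrix.mul_assoc]
      rw [resid, hbeta, hc, Matrix.mulVec_add, Matrix.mulVec_smul, Matrix.mulVec_mulVec,
        Matrix.mulVec_mulVec, Matrix.mulVec_mulVec, e, Matrix.sub_mulVec, Matrix.smul_mulVec,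
        smul_sub]
      abel
    have hquad : ∀ v : Fin n → ℝ, (C *ᵥ (U *ᵥ v)) ⬝ᵥ (M.Sig⁻¹ *ᵥ (C *ᵥ (U *ᵥ v))) = v ⬝ᵥ v := by
      intro v
      rw [hSinv, ← Matrix.mulVec_mulVec, Matrix.dotProduct_mulVec, Matrix.vecMul_transpose,
        Matrix.mulVec_mulVec (M := C⁻¹), hCC, Matrix.one_mulVec, Matrix.dotProduct_mulVec,
        ← Matrix.mulVec_transpose, Matrix.mulVec_mulVec, hUU, Matrix.one_mulVec]
    have hv : ((1 - D) *ᵥ w) ⬝ᵥ ((1 - D) *ᵥ w) = ∑ i ∈ T, w i ^ 2 := by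
      have : (1 - D) *ᵥ w = fun i => if i ∈ T then w i else 0 := by
        ext i
        rw [Matrix.sub_mulVec, Matrix.one_mulVec, Pi.sub_apply, hD, Matrix.mulVec_diagonal]
        split_ifs <;> simp
      rw [this]
      simp [dotProduct, sq]
    rw [sigHat2, hres, Matrix.mulVec_smul, smul_dotProduct, dotProduct_smul, hquad, hv]
    simp only [smul_eq_mul]
    rw [← mul_assoc, hrr]
    ring
  · intro w
    have ha : M.avec (M.Xw *ᵥ M.beta + (r • (C * U)) *ᵥ w) = r • (F *ᵥ w) := by
      rw [avec, hbeta, M.Xtw_beta_eq hc, hc, Matrix.mulVec_add, Matrix.mulVec_add,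
        add_sub_cancel_left, add_sub_cancel_left, hF, ← Matrix.mulVec_mulVec w M.Amat (H * U),
        Amat, Matrix.sub_mulVec, Matrix.mulVec_smul, Matrix.mulVec_smul, Matrix.mulVec_smul,
        ← smul_sub, Matrix.mulVec_mulVec _ _ M.Xj]
    rw [ha, Matrix.mulVec_smul, smul_dotProduct, dotProduct_smul, smul_smul, hrr, smul_eq_mul,
      ← Matrix.mulVec_mulVec, ← Matrix.mulVec_mulVec, Matrix.dotProduct_mulVec w,
      Matrix.vecMul_transpose]

end CSModel

open CSModel in
theorem stmt0 {pw pj n : ℕ} (M : CSModel pw pj n)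
    (hover : M.Overspec) (hn : pj + 2 < n) :
    M.E (fun y => (M.Rt⁻¹ * M.Lam).trace * M.sig2 / M.sigHat2 y
        + (M.avec y ⬝ᵥ (M.Rt⁻¹ *ᵥ M.avec y)) / M.sigHat2 y)
      = (n : ℝ) * M.gam / ((n : ℝ) - pj - 2)
    ∧ M.cAI
      = M.E (fun y => (M.m : ℝ) * Real.log (2 * Real.pi * M.sigHat2 y))
        + Real.log M.Rt.det + (n : ℝ) * M.gam / ((n : ℝ) - pj - 2) := by
  obtain ⟨T, K, φ, hcard, hK, htr, hE, hsig, ha⟩ := M.exists_canonical hover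
  have hT : 2 < T.card := by omega
  have hTr : (T.card : ℝ) = (n : ℝ) - pj := by
    rw [eq_sub_iff_add_eq]
    exact_mod_cast hcard
  have hn0 : (n : ℝ) ≠ 0 := by
    have : n ≠ 0 := by omega
    exact_mod_cast this
  have hn1 : (0 : ℝ) < n := by positivity
  have hs : M.sig2 ≠ 0 := M.hsig.ne'
  have hspos := M.hsig
  obtain ⟨τ, hτ⟩ : ∃ τ, τ = (M.Rt⁻¹ * M.Lam).trace := ⟨_, rfl⟩
  obtain ⟨hqi, hqv⟩ := quadForm_div_chiSq hT hK
  -- The identity survives the junk value `x / 0 = 0` on the null set where the chi-square vanishes.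
  have hpt : ∀ w, τ * M.sig2 / M.sigHat2 (φ w)
        + (M.avec (φ w) ⬝ᵥ (M.Rt⁻¹ *ᵥ M.avec (φ w))) / M.sigHat2 (φ w)
      = n * (τ * (1 / ∑ i ∈ T, w i ^ 2) + (w ⬝ᵥ (K *ᵥ w)) * (1 / ∑ i ∈ T, w i ^ 2)) := by
    intro w
    rw [ha, hsig]
    rcases eq_or_ne (∑ i ∈ T, w i ^ 2) 0 with h0 | h0
    · simp [h0]
    · field_simp
  have hint : Integrable (fun w => τ * M.sig2 / M.sigHat2 (φ w)
      + (M.avec (φ w) ⬝ᵥ (M.Rt⁻¹ *ᵥ M.avec (φ w))) / M.sigHat2 (φ w)) (stdG n) := by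
    simp_rw [hpt]
    exact (((integrable_inv_chiSq T hT).const_mul τ).add hqi).const_mul _
  have hval : ∫ w, (τ * M.sig2 / M.sigHat2 (φ w)
      + (M.avec (φ w) ⬝ᵥ (M.Rt⁻¹ *ᵥ M.avec (φ w))) / M.sigHat2 (φ w)) ∂stdG n
      = (n : ℝ) * M.gam / ((n : ℝ) - pj - 2) := by
    simp_rw [hpt]
    rw [integral_const_mul, integral_add ((integrable_inv_chiSq T hT).const_mul τ) hqi,
      integral_const_mul, integral_inv_chiSq T hT, hqv, htr, hTr, gam, hτ]
    ring
  have hlog : Integrable (fun w => (M.m : ℝ) * Real.log (2 * Real.pi * M.sigHat2 (φ w)))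
      (stdG n) := by
    have hc : 0 < 2 * Real.pi * (M.sig2 / n) := by positivity
    refine ((integrable_log_mul_chiSq (by omega) hc).const_mul (M.m : ℝ)).congr
      (Filter.Eventually.of_forall fun w => ?_)
    simp only [hsig, mul_assoc]
  refine ⟨by rw [hE, ← hτ]; exact hval, ?_⟩
  rw [cAI, hE, hE, ← hτ, ← hval]
  simp_rw [add_assoc _ (τ * M.sig2 / _)]
  have hlog' : Integrable (fun w => (M.m : ℝ) * Real.log (2 * Real.pi * M.sigHat2 (φ w))
      + Real.log M.Rt.det) (stdG n) := hlog.add (integrable_const _)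
  rw [integral_add hlog' hint, integral_add hlog (integrable_const _)]
  simp

end
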